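/- Let L ≥ 2 and 1 ≤ j ≤ L−1. Conjugation by the Kennedy–Tasaki transformation maps the Heisenberg bond to: U_KT (Sˣ_jSˣ_{j+1}+Sʸ_jSʸ_{j+1}+Sᶻ_jSᶻ_{j+1}) U_KT = −Sˣ_jSˣ_{j+1} + Sʸ_j exp(iπ(Sᶻ_j + Sˣ_{j+1})) Sʸ_{j+1} − Sᶻ_jSᶻ_{j+1}. -/

import Mathlib

noncomputable section
open Complex Matrix

/-- The Hilbert space operators of the `L`-site spin-1 chain: matrices on `(ℂ³)^{⊗L}`,
with the tensor factors indexed by sites and the single-site ordered basis `(|+⟩,|0⟩,|−⟩)`. -/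
abbrev Op (L : ℕ) : Type := Matrix (Fin L → Fin 3) (Fin L → Fin 3) ℂ

/-- The spin-1 matrix `Sˣ`. -/
def Sx : Matrix (Fin 3) (Fin 3) ℂ :=
  ((Real.sqrt 2 : ℝ) : ℂ)⁻¹ • !![0, 1, 0; 1, 0, 1; 0, 1, 0]

/-- The spin-1 matrix `Sʸ`. -/
def Sy : Matrix (Fin 3) (Fin 3) ℂ :=
  ((Real.sqrt 2 : ℝ) : ℂ)⁻¹ • !![0, -I, 0; I, 0, -I; 0, I, 0]

/-- The spin-1 matrix `Sᶻ = diag(1,0,−1)`. -/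
def Sz : Matrix (Fin 3) (Fin 3) ℂ := !![1, 0, 0; 0, 0, 0; 0, 0, -1]

/-- `site A j` is the one-site operator `A` acting on site `j` and identity elsewhere. -/
def site {L : ℕ} (A : Matrix (Fin 3) (Fin 3) ℂ) (j : Fin L) : Op L :=
  Matrix.of fun f g => ∏ k : Fin L, if k = j then A (f k) (g k) else (if f k = g k then 1 else 0)

/-- One factor `exp(iπ Sᶻ_u Sˣ_v)` of the Kennedy–Tasaki transformation. -/
def ktFactor {L : ℕ} (u v : Fin L) : Op L :=
  NormedSpace.exp (((Real.pi : ℂ) * I) • (site Sz u * site Sx v))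

/-- The Kennedy–Tasaki transformation `U_KT = ∏_{1 ≤ u < v ≤ L} exp(iπ Sᶻ_u Sˣ_v)`
(the factors pairwise commute, so the ordering is immaterial). -/
def UKT (L : ℕ) : Op L :=
  ((List.finRange L).map fun u =>
    ((List.finRange L).map fun v => if u < v then ktFactor u v else 1).prod).prod

/-- The p-wave basis vector `|↑⟩ = (|+⟩ − |−⟩)/√2`. -/
def up : Fin 3 → ℂ := ![((Real.sqrt 2 : ℝ) : ℂ)⁻¹, 0, -((Real.sqrt 2 : ℝ) : ℂ)⁻¹]

/-- The p-wave basis vector `|↓⟩ = |0⟩`. -/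
def down : Fin 3 → ℂ := ![0, 1, 0]

/-- The p-wave basis vector `|h⟩ = (|+⟩ + |−⟩)/√2`. -/
def hole : Fin 3 → ℂ := ![((Real.sqrt 2 : ℝ) : ℂ)⁻¹, 0, ((Real.sqrt 2 : ℝ) : ℂ)⁻¹]

/-- The rank-one operator `|a⟩⟨b|`. -/
def ketbra (a b : Fin 3 → ℂ) : Matrix (Fin 3) (Fin 3) ℂ := Matrix.vecMulVec a (star b)

/-- `σˣ = |↑⟩⟨↓| + |↓⟩⟨↑|` (annihilating `|h⟩`). -/
def sigx : Matrix (Fin 3) (Fin 3) ℂ := ketbra up down + ketbra down up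

/-- `σʸ = −i|↑⟩⟨↓| + i|↓⟩⟨↑|` (annihilating `|h⟩`). -/
def sigy : Matrix (Fin 3) (Fin 3) ℂ := (-I) • ketbra up down + I • ketbra down up

/-- `σᶻ = |↑⟩⟨↑| − |↓⟩⟨↓|` (annihilating `|h⟩`). -/
def sigz : Matrix (Fin 3) (Fin 3) ℂ := ketbra up up - ketbra down down

/-- `n = |↑⟩⟨↑| + |↓⟩⟨↓|` (annihilating `|h⟩`). -/
def nMat : Matrix (Fin 3) (Fin 3) ℂ := ketbra up up + ketbra down down

/-- `h = |h⟩⟨h|`. -/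
def hMat : Matrix (Fin 3) (Fin 3) ℂ := ketbra hole hole

/-- `P = ⊗_{j=1}^L n_j`, the orthogonal projection onto the hole-free subspace. -/
def Pproj (L : ℕ) : Op L := Matrix.of fun f g => ∏ k : Fin L, nMat (f k) (g k)

/-- The Heisenberg coupling `S_j · S_k`. -/
def heis {L : ℕ} (j k : Fin L) : Op L :=
  site Sx j * site Sx k + site Sy j * site Sy k + site Sz j * site Sz k

/-- The bilinear-biquadratic Hamiltonian
`H_BLBQ(θ) = Σ_{j=1}^{L−1} [cosθ (S_j·S_{j+1}) + sinθ (S_j·S_{j+1})²]`. -/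
def HBLBQ (L : ℕ) (θ : ℝ) : Op L :=
  ∑ j : Fin L, if h : (j : ℕ) + 1 < L then
    ((Real.cos θ : ℝ) : ℂ) • heis j ⟨(j : ℕ) + 1, h⟩
      + ((Real.sin θ : ℝ) : ℂ) • (heis j ⟨(j : ℕ) + 1, h⟩) ^ 2
  else 0

/-- The self-dual Hamiltonian `H_SD(θ) = H_BLBQ(θ) + U_KT H_BLBQ(θ) U_KT`. -/
def HSD (L : ℕ) (θ : ℝ) : Op L := HBLBQ L θ + UKT L * HBLBQ L θ * UKT L

/-- The spin-1/2 XXZ Hamiltonian written in the p-wave basis: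
`H_XXZ(θ) = (cosθ−sinθ) Σ_j (−σˣ_jσˣ_{j+1} + σʸ_jσʸ_{j+1}) + sinθ Σ_j σᶻ_jσᶻ_{j+1}`. -/
def HXXZ (L : ℕ) (θ : ℝ) : Op L :=
  ((Real.cos θ - Real.sin θ : ℝ) : ℂ) •
    (∑ j : Fin L, if h : (j : ℕ) + 1 < L then
      -(site sigx j * site sigx ⟨(j : ℕ) + 1, h⟩) + site sigy j * site sigy ⟨(j : ℕ) + 1, h⟩
    else 0)
  + ((Real.sin θ : ℝ) : ℂ) •
    (∑ j : Fin L, if h : (j : ℕ) + 1 < L then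
      site sigz j * site sigz ⟨(j : ℕ) + 1, h⟩
    else 0)

/-- The global product `∏_{j=1}^L exp(c • A_j)` of commuting single-site exponentials. -/
def globalProd (L : ℕ) (A : Matrix (Fin 3) (Fin 3) ℂ) (c : ℂ) : Op L :=
  ((List.finRange L).map fun j => NormedSpace.exp (c • site A j)).prod

/-- The symmetry flux `F^y_j = exp(−iπ Σ_{k<j} Sʸ_k) · Sʸ_j`. -/
def fluxY (L : ℕ) (j : Fin L) : Op L :=
  NormedSpace.exp ((-((Real.pi : ℂ) * I)) •
    ∑ k : Fin L, if (k : ℕ) < (j : ℕ) then site Sy k else 0) * site Sy j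


/-!
Put `Rᶻ = exp(iπSᶻ)` and `Rˣ = exp(iπSˣ)`. Since `Sᶻ` and `Sˣ` cube to themselves, each factor of
`U_KT` is the involution `1 - 2 (Sᶻ_u)² (Sˣ_v)²`, and all factors commute. As `Sˣ` anticommutes with
`Rᶻ` and commutes with `Rˣ`, only the factors with `u = j` move `Sˣ_j`, the factor `(j, v)`
multiplying it by `Rˣ_v`; likewise only the factors with `v = j` move `Sᶻ_j`. Hence `U_KT` attaches
the string `∏_{v > j} Rˣ_v` to `Sˣ_j`, the string `∏_{u < j} Rᶻ_u` to `Sᶻ_j`, and, since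
`Sʸ = -i[Sᶻ, Sˣ]`, both strings to `Sʸ_j`. In a product over neighbouring sites the strings cancel
up to one `Rᶻ_j` and one `Rˣ_{j+1}`.
-/

section ListProd

variable {M ι : Type*} [Monoid M]

theorem semiconjBy_list_prod_map {f s : ι → M} {a : M} (l : List ι)
    (hcomm : ∀ i k, Commute (f i) (s k)) (h : ∀ i, SemiconjBy (f i) a (a * s i)) :
    SemiconjBy (l.map f).prod a (a * (l.map s).prod) := by
  induction l with
  | nil => simp
  | cons i l ih =>
    have hstring : Commute (f i) (l.map s).prod :=
      Commute.list_prod_right _ _ (by simpa using fun k _ => hcomm i k)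
    simpa only [List.map_cons, List.prod_cons, mul_assoc]
      using SemiconjBy.mul_left ((h i).mul_right hstring) ih

theorem list_prod_mul_self_eq_one (l : List M) (hcomm : ∀ a ∈ l, ∀ b ∈ l, Commute a b)
    (h : ∀ a ∈ l, a * a = 1) : l.prod * l.prod = 1 := by
  induction l with
  | nil => simp
  | cons a l ih =>
    simp only [List.forall_mem_cons] at hcomm h
    have ha : Commute l.prod a := Commute.list_prod_left _ _ fun b hb => (hcomm.2 b hb).1
    rw [List.prod_cons, ha.mul_mul_mul_comm, h.1,
      ih (fun b hb => (hcomm.2 b hb).2) h.2, one_mul]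

theorem list_prod_map_finRange_eq_apply {L : ℕ} {f : Fin L → M} (j : Fin L)
    (h : ∀ k ≠ j, f k = 1) : ((List.finRange L).map f).prod = f j := by
  rw [List.prod_map_eq_pow_single j f fun k hk _ => h k hk, List.count_finRange, pow_one]

theorem semiconjBy_list_prod_map_finRange {L : ℕ} {f : Fin L → M} {a s : M} (j : Fin L)
    (hcomm : ∀ k, Commute (f k) s) (hj : SemiconjBy (f j) a (a * s))
    (hne : ∀ k ≠ j, Commute (f k) a) : SemiconjBy ((List.finRange L).map f).prod a (a * s) := by
  have hprod : ((List.finRange L).map (Pi.mulSingle j s)).prod = s := by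
    rw [list_prod_map_finRange_eq_apply j fun k hk => by simp [hk], Pi.mulSingle_eq_same]
  rw [← hprod]
  refine semiconjBy_list_prod_map _ (fun i k => ?_) fun k => ?_
  · obtain rfl | hk := eq_or_ne k j
    · simpa using hcomm i
    · simp [hk]
  · obtain rfl | hk := eq_or_ne k j
    · simpa using hj
    · simpa [hk] using (hne k hk).semiconjBy

theorem list_prod_finRange_mulSingle {L : ℕ} (x : Fin L → M) :
    ((List.finRange L).map fun k => (Pi.mulSingle k (x k) : Fin L → M)).prod = x := by
  funext k
  have heval := map_list_prod (Pi.evalMonoidHom (fun _ : Fin L => M) k)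
    ((List.finRange L).map fun k => (Pi.mulSingle k (x k) : Fin L → M))
  simp only [Pi.evalMonoidHom_apply, List.map_map] at heval
  rw [heval, list_prod_map_finRange_eq_apply k]
  · simp
  · intro i hi
    simp [hi.symm]

end ListProd

section PiRotation

/-- The rotation `exp(iπa)` by the angle `π` generated by `a`, in the closed form `1 - 2a²` that it
takes when `a³ = a`; see `exp_pi_mul_I_smul`. -/
def piRotation {R : Type*} [Ring R] (a : R) : R := 1 - 2 * a ^ 2

variable {R S : Type*} [Ring R] [Ring S] {a b c : R}

theorem map_piRotation {F : Type*} [FunLike F R S] [RingHomClass F R S] (f : F) (a : R) :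
    f (piRotation a) = piRotation (f a) := by
  simp only [piRotation, map_sub, map_one, map_mul, map_ofNat, map_pow]

theorem commute_piRotation_of_commute_sq (h : Commute (a ^ 2) c) : Commute (piRotation a) c :=
  (Commute.one_left c).sub_left ((Commute.ofNat_left 2 c).mul_left h)

theorem commute_piRotation (h : Commute a c) : Commute (piRotation a) c :=
  commute_piRotation_of_commute_sq (h.pow_left 2)

theorem isIdempotentElem_sq (ha : a ^ 3 = a) : IsIdempotentElem (a ^ 2) := by
  rw [IsIdempotentElem, ← pow_add, pow_succ, ha, sq]

theorem commute_sq_of_mul_add_mul_eq_self (h : a * c + c * a = c) : Commute a (c ^ 2) := by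
  have hac : a * c = c - c * a := eq_sub_of_add_eq h
  calc a * c ^ 2 = a * c * c := by rw [sq, mul_assoc]
    _ = (c - c * a) * c := by rw [hac]
    _ = c * c - c * (a * c) := by rw [sub_mul, mul_assoc]
    _ = c ^ 2 * a := by
      rw [hac]
      noncomm_ring

theorem commute_sq_piRotation (a : R) : Commute (a ^ 2) (piRotation a) :=
  (commute_piRotation_of_commute_sq (Commute.refl _)).symm

theorem piRotation_mul_self (ha : a ^ 3 = a) : piRotation a * piRotation a = 1 := by
  have hexpand : piRotation a * piRotation a = 1 - 4 * a ^ 2 + 4 * (a ^ 2 * a ^ 2) := by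
    unfold piRotation
    noncomm_ring
  rw [hexpand, (isIdempotentElem_sq ha).eq, sub_add_cancel]

theorem piRotation_mul_generator (ha : a ^ 3 = a) : piRotation a * a = -a := by
  rw [piRotation, sub_mul, one_mul, mul_assoc, ← pow_succ, ha]
  noncomm_ring

theorem generator_mul_piRotation (ha : a ^ 3 = a) : a * piRotation a = -a := by
  rw [← (commute_piRotation (Commute.refl a)).eq, piRotation_mul_generator ha]

-- The anticommutator hypothesis says that `c` exchanges the ranges of the complementary idempotents
-- `a²` and `1 - a²`, i.e. switches the control of the controlled rotation of `b`.
theorem semiconjBy_piRotation_mul (hab : Commute a b) (hbc : Commute b c) (hb : b ^ 3 = b)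
    (hac : a ^ 2 * c + c * a ^ 2 = c) :
    SemiconjBy (piRotation (a * b)) c (c * piRotation b) := by
  have hcontrol : a ^ 2 * c = c * (1 - a ^ 2) := by
    rw [mul_sub, mul_one, eq_sub_iff_add_eq, hac]
  have hidem : b ^ 2 * (a ^ 2 * b ^ 2) = a ^ 2 * b ^ 2 := by
    rw [← mul_assoc, ← (hab.pow_pow 2 2).eq, mul_assoc, (isIdempotentElem_sq hb).eq]
  calc piRotation (a * b) * c
      = c - 2 * (a ^ 2 * (b ^ 2 * c)) := by
        rw [piRotation, hab.mul_pow]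
        noncomm_ring
    _ = c - 2 * (c * (1 - a ^ 2) * b ^ 2) := by
        rw [(hbc.pow_left 2).eq, ← mul_assoc (a ^ 2), hcontrol]
    _ = c * (1 - 2 * b ^ 2 - 2 * (a ^ 2 * b ^ 2) + 4 * (a ^ 2 * b ^ 2)) := by noncomm_ring
    _ = c * piRotation b * piRotation (a * b) := by
        rw [piRotation, piRotation, hab.mul_pow, mul_assoc]
        nth_rw 2 [← hidem]
        noncomm_ring

end PiRotation

section Exponential

theorem isIdempotentElem_inv_two_smul_sq_add_self {R : Type*} [Ring R] [Algebra ℂ R] {a : R}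
    (ha : a ^ 3 = a) : IsIdempotentElem ((2⁻¹ : ℂ) • (a ^ 2 + a)) := by
  have hexpand : (a ^ 2 + a) * (a ^ 2 + a) = a ^ 2 * a ^ 2 + 2 • a ^ 3 + a ^ 2 := by noncomm_ring
  rw [IsIdempotentElem, smul_mul_smul_comm, hexpand, (isIdempotentElem_sq ha).eq, ha]
  module

variable {𝔸 : Type*} [NormedRing 𝔸] [NormedAlgebra ℂ 𝔸] [CompleteSpace 𝔸] {a : 𝔸}

theorem exp_smul_of_isIdempotentElem (z : ℂ) (ha : IsIdempotentElem a) :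
    NormedSpace.exp (z • a) = 1 + (Complex.exp z - 1) • a := by
  have hscalar := (NormedSpace.exp_series_hasSum_exp' (𝕂 := ℂ) z).smul_const a
  rw [← Complex.exp_eq_exp_ℂ] at hscalar
  have hseries : HasSum (fun n : ℕ => (n.factorial⁻¹ : ℂ) • (z • a) ^ n)
      (Complex.exp z • a + (1 - a)) := by
    refine (hscalar.add (hasSum_ite_eq 0 (1 - a))).congr_fun fun n => ?_
    cases n with
    | zero => simp
    | succ n => simp [smul_pow, ha.pow_succ_eq, smul_smul]
  rw [(NormedSpace.exp_series_hasSum_exp' (𝕂 := ℂ) (z • a)).unique hseries]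
  module

theorem exp_smul_of_pow_three_eq_self (z : ℂ) (ha : a ^ 3 = a) :
    NormedSpace.exp (z • a) = 1 + Complex.sinh z • a + (Complex.cosh z - 1) • a ^ 2 := by
  -- The spectral projections of `a` at the eigenvalues `1` and `-1`.
  set p : 𝔸 := (2⁻¹ : ℂ) • (a ^ 2 + a) with hp
  set q : 𝔸 := (2⁻¹ : ℂ) • ((-a) ^ 2 + -a) with hq
  have hpp : IsIdempotentElem p := isIdempotentElem_inv_two_smul_sq_add_self ha
  have hqq : IsIdempotentElem q :=
    isIdempotentElem_inv_two_smul_sq_add_self (by rw [Odd.neg_pow (by decide), ha])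
  have hpq : p * q = 0 := by
    have hexpand : (a ^ 2 + a) * ((-a) ^ 2 + -a) = a ^ 2 * a ^ 2 - a ^ 2 := by noncomm_ring
    rw [hp, hq, smul_mul_smul_comm, hexpand, (isIdempotentElem_sq ha).eq, sub_self, smul_zero]
  have hcomm : Commute p q :=
    have hself : Commute (a ^ 2 + a) a := ((Commute.refl a).pow_left 2).add_left (Commute.refl a)
    ((hself.neg_right.pow_right 2).add_right hself.neg_right).smul_left _ |>.smul_right _
  let _ : NormedAlgebra ℚ 𝔸 := NormedAlgebra.restrictScalars ℚ ℂ 𝔸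
  calc NormedSpace.exp (z • a)
      = NormedSpace.exp (z • p + -z • q) := by
        congr 1
        rw [hp, hq, neg_sq]
        module
    _ = (1 + (Complex.exp z - 1) • p) * (1 + (Complex.exp (-z) - 1) • q) := by
        rw [NormedSpace.exp_add_of_commute ((hcomm.smul_left z).smul_right (-z)),
          exp_smul_of_isIdempotentElem z hpp, exp_smul_of_isIdempotentElem (-z) hqq]
    _ = 1 + (Complex.exp z - 1) • p + (Complex.exp (-z) - 1) • q := by
        rw [mul_add, mul_one, add_mul, one_mul, smul_mul_smul_comm, hpq, smul_zero, add_zero]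
    _ = 1 + Complex.sinh z • a + (Complex.cosh z - 1) • a ^ 2 := by
        rw [hp, hq, neg_sq, Complex.sinh, Complex.cosh]
        module

theorem exp_pi_mul_I_smul (ha : a ^ 3 = a) :
    NormedSpace.exp (((Real.pi : ℂ) * I) • a) = piRotation a := by
  rw [exp_smul_of_pow_three_eq_self _ ha, Complex.sinh_mul_I, Complex.cosh_mul_I, Complex.sin_pi,
    Complex.cos_pi, piRotation, two_mul]
  module

open scoped Matrix.Norms.Operator in
theorem matrix_exp_pi_mul_I_smul {n : Type*} [Fintype n] [DecidableEq n] {A : Matrix n n ℂ}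
    (hA : A ^ 3 = A) : NormedSpace.exp (((Real.pi : ℂ) * I) • A) = piRotation A :=
  exp_pi_mul_I_smul hA

end Exponential

section SpinOne

theorem inv_sqrt_two_mul_self :
    ((Real.sqrt 2 : ℝ) : ℂ)⁻¹ * ((Real.sqrt 2 : ℝ) : ℂ)⁻¹ = 1 / 2 := by
  rw [← mul_inv, ← Complex.ofReal_mul, Real.mul_self_sqrt (by norm_num)]
  norm_num

theorem Sz_sq : Sz ^ 2 = !![1, 0, 0; 0, 0, 0; 0, 0, 1] := by
  rw [sq, Sz]
  ext i j
  fin_cases i <;> fin_cases j <;> simp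

theorem Sx_sq : Sx ^ 2 = !![1 / 2, 0, 1 / 2; 0, 1, 0; 1 / 2, 0, 1 / 2] := by
  rw [Sx, sq, smul_mul_smul_comm, inv_sqrt_two_mul_self]
  ext i j
  fin_cases i <;> fin_cases j <;> norm_num

theorem Sz_pow_three : Sz ^ 3 = Sz := by
  rw [pow_succ, Sz_sq, Sz]
  ext i j
  fin_cases i <;> fin_cases j <;> simp

theorem Sx_pow_three : Sx ^ 3 = Sx := by
  rw [pow_succ, Sx_sq, Sx, mul_smul_comm]
  congr 1
  ext i j
  fin_cases i <;> fin_cases j <;> norm_num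

theorem Sz_sq_mul_Sx_add : Sz ^ 2 * Sx + Sx * Sz ^ 2 = Sx := by
  rw [Sz_sq, Sx]
  ext i j
  fin_cases i <;> fin_cases j <;> simp

theorem Sx_sq_mul_Sz_add : Sx ^ 2 * Sz + Sz * Sx ^ 2 = Sz := by
  rw [Sx_sq, Sz]
  ext i j
  fin_cases i <;> fin_cases j <;> norm_num

theorem commute_Sz_sq_Sx_sq : Commute (Sz ^ 2) (Sx ^ 2) :=
  commute_sq_of_mul_add_mul_eq_self Sz_sq_mul_Sx_add

theorem commute_Sz_sq_piRotation_Sx : Commute (Sz ^ 2) (piRotation Sx) :=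
  (commute_piRotation_of_commute_sq commute_Sz_sq_Sx_sq.symm).symm

theorem commute_Sx_sq_piRotation_Sz : Commute (Sx ^ 2) (piRotation Sz) :=
  (commute_piRotation_of_commute_sq commute_Sz_sq_Sx_sq).symm

theorem Sy_eq_smul_commutator : Sy = (-I) • (Sz * Sx - Sx * Sz) := by
  rw [Sx, Sy, Sz]
  ext i j
  fin_cases i <;> fin_cases j <;> simp [mul_comm]

end SpinOne

section Tensor

/-- The tensor product `⊗_k M_k` of operators on the factors of `(Rⁿ)^{⊗ι}`, as a homomorphism in
the family `M`; basis vectors of the tensor product are indexed by functions `ι → n`. -/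
def tensorHom (ι n R : Type*) [Fintype ι] [Fintype n] [DecidableEq ι] [DecidableEq n]
    [CommSemiring R] : (ι → Matrix n n R) →* Matrix (ι → n) (ι → n) R where
  toFun M := Matrix.of fun f g => ∏ k, M k (f k) (g k)
  map_one' := by
    ext f g
    simp only [Matrix.of_apply, Pi.one_apply, Matrix.one_apply, Finset.prod_ite_zero,
      Finset.prod_const_one, Finset.mem_univ, true_imp_iff, funext_iff]
  map_mul' M N := by
    ext f g
    simp only [Matrix.of_apply, Pi.mul_apply, Matrix.mul_apply, ← Finset.prod_mul_distrib]
    rw [Finset.prod_univ_sum, Fintype.piFinset_univ]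

variable {L : ℕ} {A B : Matrix (Fin 3) (Fin 3) ℂ} {j k : Fin L}

theorem site_eq_tensorHom (A : Matrix (Fin 3) (Fin 3) ℂ) (j : Fin L) :
    site A j = tensorHom (Fin L) (Fin 3) ℂ (Pi.mulSingle j A) := by
  ext f g
  rw [site, tensorHom, MonoidHom.coe_mk, OneHom.coe_mk, Matrix.of_apply, Matrix.of_apply]
  refine Finset.prod_congr rfl fun k _ => ?_
  by_cases hk : k = j
  · subst hk
    simp
  · simp [hk, Matrix.one_apply]

theorem site_apply (A : Matrix (Fin 3) (Fin 3) ℂ) (j : Fin L) (f g : Fin L → Fin 3) :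
    site A j f g = A (f j) (g j) * ∏ k ∈ Finset.univ.erase j, if f k = g k then 1 else 0 := by
  rw [site, Matrix.of_apply, ← Finset.mul_prod_erase _ _ (Finset.mem_univ j), if_pos rfl]
  congr 1
  exact Finset.prod_congr rfl fun k hk => if_neg (Finset.ne_of_mem_erase hk)

theorem site_one (j : Fin L) : site 1 j = 1 := by
  rw [site_eq_tensorHom, Pi.mulSingle_one, map_one]

theorem site_mul (A B : Matrix (Fin 3) (Fin 3) ℂ) (j : Fin L) :
    site (A * B) j = site A j * site B j := by
  simp only [site_eq_tensorHom, Pi.mulSingle_mul, map_mul]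

theorem site_add (A B : Matrix (Fin 3) (Fin 3) ℂ) (j : Fin L) :
    site (A + B) j = site A j + site B j := by
  ext f g
  simp only [site_apply, Matrix.add_apply, add_mul]

theorem site_smul (c : ℂ) (A : Matrix (Fin 3) (Fin 3) ℂ) (j : Fin L) :
    site (c • A) j = c • site A j := by
  ext f g
  simp only [site_apply, Matrix.smul_apply, smul_eq_mul, mul_assoc]

/-- The embedding `A ↦ A_j` of the one-site operators at site `j` as an algebra homomorphism. -/
def siteHom (j : Fin L) : Matrix (Fin 3) (Fin 3) ℂ →ₐ[ℂ] Op L :=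
  AlgHom.ofLinearMap
    { toFun := fun A => site A j
      map_add' := fun A B => site_add A B j
      map_smul' := fun c A => site_smul c A j }
    (site_one j) (fun A B => site_mul A B j)

theorem site_sub (A B : Matrix (Fin 3) (Fin 3) ℂ) (j : Fin L) :
    site (A - B) j = site A j - site B j := map_sub (siteHom j) A B

theorem site_neg (A : Matrix (Fin 3) (Fin 3) ℂ) (j : Fin L) : site (-A) j = -site A j :=
  map_neg (siteHom j) A

theorem site_pow (A : Matrix (Fin 3) (Fin 3) ℂ) (n : ℕ) (j : Fin L) :
    site (A ^ n) j = site A j ^ n := map_pow (siteHom j) A n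

theorem site_piRotation (A : Matrix (Fin 3) (Fin 3) ℂ) (j : Fin L) :
    site (piRotation A) j = piRotation (site A j) := map_piRotation (siteHom j) A

theorem site_pow_three (hA : A ^ 3 = A) (j : Fin L) : site A j ^ 3 = site A j := by
  rw [← site_pow, hA]

theorem commute_site_tensorHom {M : Fin L → Matrix (Fin 3) (Fin 3) ℂ} (h : Commute A (M j)) :
    Commute (site A j) (tensorHom (Fin L) (Fin 3) ℂ M) := by
  rw [site_eq_tensorHom]
  refine Commute.map (Pi.commute_iff.2 fun k => ?_) (tensorHom (Fin L) (Fin 3) ℂ)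
  obtain rfl | hk := eq_or_ne k j
  · simpa using h
  · simp [hk]

theorem commute_site_of_ne (A B : Matrix (Fin 3) (Fin 3) ℂ) (hjk : j ≠ k) :
    Commute (site A j) (site B k) := by
  rw [site_eq_tensorHom B k]
  exact commute_site_tensorHom (by simp [hjk])

theorem commute_site_of_commute (h : Commute A B) (j k : Fin L) :
    Commute (site A j) (site B k) := by
  obtain rfl | hjk := eq_or_ne j k
  · exact h.map (siteHom j)
  · exact commute_site_of_ne A B hjk

theorem list_prod_finRange_site (M : Fin L → Matrix (Fin 3) (Fin 3) ℂ) :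
    ((List.finRange L).map fun k => site (M k) k).prod = tensorHom (Fin L) (Fin 3) ℂ M := by
  have hmap := map_list_prod (tensorHom (Fin L) (Fin 3) ℂ)
    ((List.finRange L).map fun k => (Pi.mulSingle k (M k) : Fin L → Matrix (Fin 3) (Fin 3) ℂ))
  rw [list_prod_finRange_mulSingle, List.map_map] at hmap
  simp only [hmap, site_eq_tensorHom, Function.comp_def]

end Tensor

section String

variable {L : ℕ}

/-- The string operator `(∏_{k < j} Z_k) A_j (∏_{k > j} X_k)`. -/
def stringOp (Z A X : Matrix (Fin 3) (Fin 3) ℂ) (j : Fin L) : Op L :=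
  tensorHom (Fin L) (Fin 3) ℂ fun k => if k < j then Z else if k = j then A else X

theorem stringOp_mul (Z A X Z' A' X' : Matrix (Fin 3) (Fin 3) ℂ) (j : Fin L) :
    stringOp Z A X j * stringOp Z' A' X' j = stringOp (Z * Z') (A * A') (X * X') j := by
  rw [stringOp, stringOp, stringOp, ← map_mul]
  congr 1
  funext k
  simp only [Pi.mul_apply]
  split_ifs <;> rfl

theorem site_eq_stringOp (A : Matrix (Fin 3) (Fin 3) ℂ) (j : Fin L) :
    site A j = stringOp 1 A 1 j := by
  rw [site_eq_tensorHom, stringOp]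
  congr 1
  funext k
  simp only [Pi.mulSingle_apply]
  split_ifs with hk hlt <;> first | rfl | exact absurd hk hlt.ne

theorem site_mul_stringOp (Z A X : Matrix (Fin 3) (Fin 3) ℂ) (j : Fin L) :
    site A j * stringOp Z 1 X j = stringOp Z A X j := by
  rw [site_eq_stringOp, stringOp_mul, one_mul, mul_one, one_mul]

theorem stringOp_one_one_right (Z : Matrix (Fin 3) (Fin 3) ℂ) (j : Fin L) :
    stringOp Z 1 1 j = tensorHom (Fin L) (Fin 3) ℂ fun k => if k < j then Z else 1 := by
  simp only [stringOp, ite_self]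

theorem stringOp_one_one_left (X : Matrix (Fin 3) (Fin 3) ℂ) (j : Fin L) :
    stringOp 1 1 X j = tensorHom (Fin L) (Fin 3) ℂ fun k => if j < k then X else 1 := by
  rw [stringOp]
  congr 1
  funext k
  obtain hk | rfl | hk := lt_trichotomy k j
  · simp [hk, hk.asymm]
  · simp
  · simp [hk, hk.asymm, hk.ne']

theorem commute_site_stringOp {Z A X B : Matrix (Fin 3) (Fin 3) ℂ} (hZ : Commute B Z)
    (hA : Commute B A) (hX : Commute B X) (j k : Fin L) :
    Commute (site B k) (stringOp Z A X j) := by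
  refine commute_site_tensorHom ?_
  split_ifs <;> assumption

theorem stringOp_smul_sub (Z A B X : Matrix (Fin 3) (Fin 3) ℂ) (c : ℂ) (j : Fin L) :
    stringOp Z (c • (A - B)) X j = c • (stringOp Z A X j - stringOp Z B X j) := by
  rw [← site_mul_stringOp Z (c • (A - B)) X, ← site_mul_stringOp Z A X, ← site_mul_stringOp Z B X,
    site_smul, site_sub, smul_mul_assoc, sub_mul]

theorem stringOp_mul_stringOp_succ {Z A B X : Matrix (Fin 3) (Fin 3) ℂ} (hZ : Z * Z = 1)
    (hX : X * X = 1) {j k : Fin L} (hjk : (k : ℕ) = j + 1) :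
    stringOp Z A X j * stringOp Z B X k = site (A * Z) j * site (X * B) k := by
  rw [stringOp, stringOp, site_eq_tensorHom, site_eq_tensorHom, ← map_mul, ← map_mul]
  congr 1
  funext l
  simp only [Pi.mul_apply, Pi.mulSingle_apply, Fin.lt_def, Fin.ext_iff]
  rcases lt_trichotomy (l : ℕ) j with hl | hl | hl
  · simp [hl, hl.ne, hjk, hZ, show (l : ℕ) < j + 1 by omega, show (l : ℕ) ≠ j + 1 by omega]
  · simp [hl, hjk]
  · obtain hk | hk := eq_or_ne (l : ℕ) (j + 1)
    · simp [hk, hjk]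
    · simp [hjk, hk, hX, hl.ne', show ¬(l : ℕ) < j by omega, show ¬(l : ℕ) < j + 1 by omega]

end String

section KennedyTasaki

variable {L : ℕ} {u v : Fin L}

theorem site_Sz_mul_site_Sx_pow_three (huv : u ≠ v) :
    (site Sz u * site Sx v) ^ 3 = site Sz u * site Sx v := by
  rw [(commute_site_of_ne Sz Sx huv).mul_pow, site_pow_three Sz_pow_three,
    site_pow_three Sx_pow_three]

theorem ktFactor_eq_piRotation (huv : u ≠ v) :
    ktFactor u v = piRotation (site Sz u * site Sx v) :=
  matrix_exp_pi_mul_I_smul (site_Sz_mul_site_Sx_pow_three huv)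

/-- The factor of `U_KT` at an arbitrary pair of sites, trivial unless `u < v`. -/
def ktEntry (u v : Fin L) : Op L := if u < v then ktFactor u v else 1

/-- The product `∏_{v > u} exp(iπ Sᶻ_u Sˣ_v)` of the factors of `U_KT` controlled by site `u`. -/
def ktRow (u : Fin L) : Op L := ((List.finRange L).map (ktEntry u)).prod

theorem UKT_eq_prod_ktRow (L : ℕ) : UKT L = ((List.finRange L).map ktRow).prod := rfl

theorem ktEntry_mul_self (u v : Fin L) : ktEntry u v * ktEntry u v = 1 := by
  unfold ktEntry
  split_ifs with huv
  · rw [ktFactor_eq_piRotation huv.ne]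
    exact piRotation_mul_self (site_Sz_mul_site_Sx_pow_three huv.ne)
  · exact one_mul 1

theorem commute_ktEntry {C : Op L} (hz : Commute (site (Sz ^ 2) u) C)
    (hx : Commute (site (Sx ^ 2) v) C) : Commute (ktEntry u v) C := by
  unfold ktEntry
  split_ifs with huv
  · rw [ktFactor_eq_piRotation huv.ne]
    refine commute_piRotation_of_commute_sq ?_
    rw [(commute_site_of_ne Sz Sx huv.ne).mul_pow, ← site_pow, ← site_pow]
    exact hz.mul_left hx
  · exact Commute.one_left C

theorem commute_ktRow {C : Op L} (hz : Commute (site (Sz ^ 2) u) C)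
    (hx : ∀ v, Commute (site (Sx ^ 2) v) C) : Commute (ktRow u) C :=
  Commute.list_prod_left _ _ (by simpa using fun v => commute_ktEntry hz (hx v))

theorem commute_ktEntry_ktEntry (u v u' v' : Fin L) :
    Commute (ktEntry u v) (ktEntry u' v') :=
  commute_ktEntry
    (commute_ktEntry (commute_site_of_commute (Commute.refl _) _ _)
      (commute_site_of_commute commute_Sz_sq_Sx_sq.symm _ _)).symm
    (commute_ktEntry (commute_site_of_commute commute_Sz_sq_Sx_sq _ _)
      (commute_site_of_commute (Commute.refl _) _ _)).symm

theorem commute_ktRow_ktRow (u u' : Fin L) : Commute (ktRow u) (ktRow u') :=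
  Commute.list_prod_left _ _ (List.forall_mem_map.2 fun v _ =>
    Commute.list_prod_right _ _ (List.forall_mem_map.2 fun v' _ =>
      commute_ktEntry_ktEntry u v u' v'))

theorem ktRow_mul_self (u : Fin L) : ktRow u * ktRow u = 1 :=
  list_prod_mul_self_eq_one _
    (List.forall_mem_map.2 fun v _ => List.forall_mem_map.2 fun v' _ =>
      commute_ktEntry_ktEntry u v u v')
    (List.forall_mem_map.2 fun v _ => ktEntry_mul_self u v)

theorem UKT_mul_self (L : ℕ) : UKT L * UKT L = 1 :=
  list_prod_mul_self_eq_one _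
    (List.forall_mem_map.2 fun u _ => List.forall_mem_map.2 fun u' _ => commute_ktRow_ktRow u u')
    (List.forall_mem_map.2 fun u _ => ktRow_mul_self u)

theorem semiconjBy_ktEntry_site_Sx (j v : Fin L) :
    SemiconjBy (ktEntry j v) (site Sx j)
      (site Sx j * site (if j < v then piRotation Sx else 1) v) := by
  unfold ktEntry
  split_ifs with hjv
  · rw [ktFactor_eq_piRotation hjv.ne, site_piRotation]
    refine semiconjBy_piRotation_mul (commute_site_of_ne Sz Sx hjv.ne)
      (commute_site_of_ne Sx Sx hjv.ne') (site_pow_three Sx_pow_three v) ?_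
    rw [← site_pow, ← site_mul, ← site_mul, ← site_add, Sz_sq_mul_Sx_add]
  · rw [site_one, mul_one]
    exact SemiconjBy.one_left _

theorem semiconjBy_ktEntry_site_Sz (u j : Fin L) :
    SemiconjBy (ktEntry u j) (site Sz j)
      (site Sz j * site (if u < j then piRotation Sz else 1) u) := by
  unfold ktEntry
  split_ifs with huj
  · have hcomm := commute_site_of_ne Sz Sx huj.ne
    rw [ktFactor_eq_piRotation huj.ne, site_piRotation, hcomm.eq]
    refine semiconjBy_piRotation_mul hcomm.symm
      (commute_site_of_ne Sz Sz huj.ne) (site_pow_three Sz_pow_three u) ?_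
    rw [← site_pow, ← site_mul, ← site_mul, ← site_add, Sx_sq_mul_Sz_add]
  · rw [site_one, mul_one]
    exact SemiconjBy.one_left _

theorem semiconjBy_ktRow_site_Sx (j : Fin L) :
    SemiconjBy (ktRow j) (site Sx j) (stringOp 1 Sx (piRotation Sx) j) := by
  rw [← site_mul_stringOp, stringOp_one_one_left, ← list_prod_finRange_site]
  refine semiconjBy_list_prod_map _ (fun v w => ?_) (semiconjBy_ktEntry_site_Sx j)
  split_ifs
  · exact commute_ktEntry (commute_site_of_commute commute_Sz_sq_piRotation_Sx _ _)
      (commute_site_of_commute (commute_sq_piRotation Sx) _ _)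
  · rw [site_one]
    exact Commute.one_right _

theorem semiconjBy_ktRow_site_Sz (u j : Fin L) :
    SemiconjBy (ktRow u) (site Sz j)
      (site Sz j * site (if u < j then piRotation Sz else 1) u) := by
  refine semiconjBy_list_prod_map_finRange j (fun v => ?_) (semiconjBy_ktEntry_site_Sz u j)
    fun v hv => commute_ktEntry (commute_site_of_commute ((Commute.refl Sz).pow_left 2) _ _)
      (commute_site_of_ne _ _ hv)
  split_ifs
  · exact commute_ktEntry (commute_site_of_commute (commute_sq_piRotation Sz) _ _)
      (commute_site_of_commute commute_Sx_sq_piRotation_Sz _ _)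
  · rw [site_one]
    exact Commute.one_right _

theorem semiconjBy_UKT_site_Sx (j : Fin L) :
    SemiconjBy (UKT L) (site Sx j) (stringOp 1 Sx (piRotation Sx) j) := by
  have hrow := semiconjBy_ktRow_site_Sx j
  rw [← site_mul_stringOp] at hrow ⊢
  refine semiconjBy_list_prod_map_finRange j (fun u => ?_) hrow fun u hu => ?_
  · exact commute_ktRow
      (commute_site_stringOp (.one_right _) (.one_right _) commute_Sz_sq_piRotation_Sx _ _)
      (commute_site_stringOp (.one_right _) (.one_right _) (commute_sq_piRotation Sx) _)
  · exact commute_ktRow (commute_site_of_ne _ _ hu)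
      fun v => commute_site_of_commute ((Commute.refl Sx).pow_left 2) _ _

theorem semiconjBy_UKT_site_Sz (j : Fin L) :
    SemiconjBy (UKT L) (site Sz j) (stringOp (piRotation Sz) Sz 1 j) := by
  rw [← site_mul_stringOp, stringOp_one_one_right, ← list_prod_finRange_site, UKT_eq_prod_ktRow]
  refine semiconjBy_list_prod_map _ (fun u w => ?_) (semiconjBy_ktRow_site_Sz · j)
  split_ifs
  · exact commute_ktRow (commute_site_of_commute (commute_sq_piRotation Sz) _ _)
      fun v => commute_site_of_commute commute_Sx_sq_piRotation_Sz _ _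
  · rw [site_one]
    exact Commute.one_right _

theorem semiconjBy_UKT_site_Sy (j : Fin L) :
    SemiconjBy (UKT L) (site Sy j) (stringOp (piRotation Sz) Sy (piRotation Sx) j) := by
  have hx := semiconjBy_UKT_site_Sx j
  have hz := semiconjBy_UKT_site_Sz j
  have hcommutator := ((hz.mul_right hx).sub_right (hx.mul_right hz)).smul_right (-I)
  rw [stringOp_mul, stringOp_mul, mul_one, one_mul, mul_one, one_mul, ← stringOp_smul_sub,
    ← site_mul, ← site_mul, ← site_sub, ← site_smul, ← Sy_eq_smul_commutator] at hcommutator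
  exact hcommutator

theorem UKT_mul_site_mul_site_mul_UKT {A Z X : Matrix (Fin 3) (Fin 3) ℂ} (hZ : Z * Z = 1)
    (hX : X * X = 1) (hA : ∀ j : Fin L, SemiconjBy (UKT L) (site A j) (stringOp Z A X j))
    {j k : Fin L} (hjk : (k : ℕ) = j + 1) :
    UKT L * (site A j * site A k) * UKT L = site (A * Z) j * site (X * A) k := by
  rw [((hA j).mul_right (hA k)).eq, mul_assoc, UKT_mul_self, mul_one,
    stringOp_mul_stringOp_succ hZ hX hjk]

theorem exp_pi_mul_I_smul_site_add_site {A B : Matrix (Fin 3) (Fin 3) ℂ} (hA : A ^ 3 = A)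
    (hB : B ^ 3 = B) {j k : Fin L} (hjk : j ≠ k) :
    NormedSpace.exp (((Real.pi : ℂ) * I) • (site A j + site B k)) =
      site (piRotation A) j * site (piRotation B) k := by
  have hcomm := ((commute_site_of_ne A B hjk).smul_left (Real.pi * I)).smul_right (Real.pi * I)
  rw [smul_add, Matrix.exp_add_of_commute _ _ hcomm,
    matrix_exp_pi_mul_I_smul (site_pow_three hA j), matrix_exp_pi_mul_I_smul (site_pow_three hB k),
    site_piRotation, site_piRotation]

end KennedyTasaki

/-- Conjugation by the Kennedy–Tasaki transformation maps the Heisenberg bond to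
`−Sˣ_jSˣ_{j+1} + Sʸ_j exp(iπ(Sᶻ_j + Sˣ_{j+1})) Sʸ_{j+1} − Sᶻ_jSᶻ_{j+1}`. -/
theorem UKT_heisenberg_bond (L : ℕ) (hL : 2 ≤ L) (j : Fin L) (hj : (j : ℕ) + 1 < L) :
    UKT L * heis j ⟨(j : ℕ) + 1, hj⟩ * UKT L =
      -(site Sx j * site Sx ⟨(j : ℕ) + 1, hj⟩)
        + site Sy j *
            NormedSpace.exp (((Real.pi : ℂ) * I) • (site Sz j + site Sx ⟨(j : ℕ) + 1, hj⟩)) *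
            site Sy ⟨(j : ℕ) + 1, hj⟩
        - site Sz j * site Sz ⟨(j : ℕ) + 1, hj⟩ := by
  set k : Fin L := ⟨(j : ℕ) + 1, hj⟩
  have hne : j ≠ k := Fin.ne_of_val_ne (Nat.ne_add_one _)
  have hRz := piRotation_mul_self Sz_pow_three
  have hRx := piRotation_mul_self Sx_pow_three
  have hx : UKT L * (site Sx j * site Sx k) * UKT L = -(site Sx j * site Sx k) := by
    rw [UKT_mul_site_mul_site_mul_UKT (one_mul 1) hRx semiconjBy_UKT_site_Sx rfl, mul_one,
      piRotation_mul_generator Sx_pow_three, site_neg, mul_neg]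
  have hz : UKT L * (site Sz j * site Sz k) * UKT L = -(site Sz j * site Sz k) := by
    rw [UKT_mul_site_mul_site_mul_UKT hRz (one_mul 1) semiconjBy_UKT_site_Sz rfl, one_mul,
      generator_mul_piRotation Sz_pow_three, site_neg, neg_mul]
  have hy : UKT L * (site Sy j * site Sy k) * UKT L =
      site Sy j * NormedSpace.exp (((Real.pi : ℂ) * I) • (site Sz j + site Sx k)) * site Sy k := by
    rw [UKT_mul_site_mul_site_mul_UKT hRz hRx semiconjBy_UKT_site_Sy rfl,
      exp_pi_mul_I_smul_site_add_site Sz_pow_three Sx_pow_three hne]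
    simp only [site_mul, mul_assoc]
  rw [heis, mul_add, mul_add, add_mul, add_mul, hx, hy, hz, sub_eq_add_neg]

end
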